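/- Let (M_t)_{t∈ℝ} be a family of complete metric spaces and let (μ_{st})_{s,t∈ℝ} be a local approximate flow with data ε > 0, exponents (a_i, b_i), constants C_i, and Lipschitz-control function g, and let (φ_{st}) be the limit maps: for each s, t, φ_{st} is the uniform limit of μ^I_{st} as mesh(I) → 0. Then for all s, t ∈ ℝ and all u between s and t, φ_{st} = φ_{su} ∘ φ_{ut}. -/

import Mathlib

/-!
If `I` subdivides the interval between `s` and `u`, and `J` the one between `u` and `t`, then the
concatenation `IJ` subdivides the interval between `s` and `t`, its mesh is the larger of the two
meshes, and `μ^{IJ}_{st} = μ^I_{su} ∘ μ^J_{ut}` (`Subdivision.append_comp`). As both meshes tend to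
zero the left side tends to `φ_{st}`. The right side tends to `φ_{su} ∘ φ_{ut}`: the convergence
`μ^I_{su} → φ_{su}` is uniform, and `φ_{su}` is continuous, being a uniform limit of compositions
of continuous maps (`limit_continuous`). Equidistant subdivisions supply arbitrarily small meshes.

The maps along a chain live between fibres `M (x i)` over propositionally equal base points, so
chains are compared through heterogeneous equality.
-/

open scoped ENNReal

noncomputable section

/-- Extended uniform distance `sup_x edist (u x) (v x)` between two maps. -/
def unifDist {α β : Type*} [PseudoEMetricSpace β] (u v : α → β) : ℝ≥0∞ :=
  ⨆ x, edist (u x) (v x)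

/-- `h` is Lipschitz with (real) constant `K`:
`edist (h y) (h y') ≤ K * edist y y'` for all `y, y'`. -/
def LipWith {α β : Type*} [PseudoEMetricSpace α] [PseudoEMetricSpace β]
    (K : ℝ) (h : α → β) : Prop :=
  ∀ y y', edist (h y) (h y') ≤ ENNReal.ofReal K * edist y y'

/-- The composition `μ (x 0) (x 1) ∘ μ (x 1) (x 2) ∘ ⋯ ∘ μ (x (k-1)) (x k)`
of the maps `μ` along the finite chain of points `x 0, …, x k`. -/
def compAlong {P : Type*} {M : P → Type*} (μ : ∀ x y : P, M y → M x) (x : ℕ → P) :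
    ∀ k : ℕ, M (x k) → M (x 0)
  | 0 => id
  | k+1 => fun m => compAlong μ x k (μ (x k) (x (k+1)) m)

/-- Transport a map `M a → M b` along equalities of base points. -/
def castM {P : Type*} (M : P → Type*) {a b c d : P} (h1 : a = c) (h2 : b = d)
    (f : M a → M b) : M c → M d :=
  fun m => cast (congrArg M h2) (f (cast (congrArg M h1.symm) m))

/-- A subdivision `(t_0, …, t_k)` of the interval between `s` and `t`: a finite sequence
with `t_0 = s`, `t_k = t`, arranged in increasing order if `s < t` and decreasing order
if `s > t`. -/
structure Subdivision (s t : ℝ) where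
  k : ℕ
  pt : ℕ → ℝ
  k_pos : 0 < k
  first : pt 0 = s
  last : pt k = t
  mono_of_le : s ≤ t → ∀ i j, i ≤ j → j ≤ k → pt i ≤ pt j
  anti_of_ge : t ≤ s → ∀ i j, i ≤ j → j ≤ k → pt j ≤ pt i

/-- The mesh `max_{1 ≤ j ≤ k} |t_j - t_{j-1}|` of a subdivision. -/
def Subdivision.mesh {s t : ℝ} (I : Subdivision s t) : ℝ :=
  ⨆ j : Fin I.k, |I.pt (j.1 + 1) - I.pt j.1|

/-- The value `ζ(x) = Σ_{ℓ ≥ 1} ℓ^{-x}` of the Riemann zeta function at a real `x`. -/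
def zetaR (x : ℝ) : ℝ := ∑' m : ℕ, ((m : ℝ) + 1) ^ (-x)

/-- A local approximate flow on a family `(M t)` of complete metric spaces, with data
`ε > 0`, exponents `a i, b i > 0` with `a i + b i = 1 + ε`, constants `C i > 0`, and
Lipschitz-control functions `f` and `g`. -/
structure IsLocalApproxFlow {M : ℝ → Type*} [∀ t, MetricSpace (M t)]
    (μ : ∀ s t : ℝ, M t → M s) (ε : ℝ) (n : ℕ) (a b C : Fin n → ℝ)
    (f g : ℝ → ℝ) : Prop where
  continuous : ∀ s t, Continuous (μ s t)
  id_eq : ∀ t, μ t t = id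
  eps_pos : 0 < ε
  n_pos : 0 < n
  a_pos : ∀ i, 0 < a i
  b_pos : ∀ i, 0 < b i
  ab_eq : ∀ i, a i + b i = 1 + ε
  C_pos : ∀ i, 0 < C i
  f_cont : Continuous f
  f_nonneg : ∀ x, 0 ≤ f x
  f_zero : f 0 = 0
  lip : ∀ s t, LipWith (1 + f (t - s)) (μ s t)
  three_point : ∀ s t u, unifDist (μ s t) (fun x => μ s u (μ u t x)) ≤
    ENNReal.ofReal (∑ i, C i * |t - u| ^ a i * |u - s| ^ b i)
  g_mono : MonotoneOn g (Set.Ici 0)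
  g_cont : ContinuousOn g (Set.Ici 0)
  g_ge_one : ∀ x ∈ Set.Ici (0 : ℝ), 1 ≤ g x
  lip_chain : ∀ (k : ℕ) (u : ℕ → ℝ),
    LipWith (g (∑ j ∈ Finset.range k, |u (j + 1) - u j|)) (compAlong μ u k)

/-- The composition `μ^I_{st} = μ_{t_0 t_1} ∘ ⋯ ∘ μ_{t_{k-1} t_k}` along a subdivision `I`
of the interval between `s` and `t`, viewed as a map `M t → M s`. -/
def Subdivision.comp {M : ℝ → Type*} {s t : ℝ} (I : Subdivision s t)
    (μ : ∀ s t : ℝ, M t → M s) : M t → M s :=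
  castM M I.last I.first (compAlong μ I.pt I.k)

lemma edist_le_unifDist {α β : Type*} [PseudoEMetricSpace β] (v w : α → β) (x : α) :
    edist (v x) (w x) ≤ unifDist v w :=
  le_iSup (fun x => edist (v x) (w x)) x

section Chains

lemma castM_heq {P : Type*} (M : P → Type*) {a b c d : P} (h1 : a = c) (h2 : b = d)
    (f : M a → M b) {m : M c} {m' : M a} (hm : m ≍ m') : castM M h1 h2 f m ≍ f m' := by
  subst h1 h2
  cases hm
  rfl

lemma map_heq {P : Type*} {M : P → Type*} (μ : ∀ x y : P, M y → M x) {a a' b b' : P}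
    (ha : a = a') (hb : b = b') {m : M b} {m' : M b'} (hm : m ≍ m') :
    μ a b m ≍ μ a' b' m' := by
  subst ha hb
  cases hm
  rfl

/-- The composition along a chain depends only on its points `x 0, …, x k`. -/
lemma compAlong_heq {P : Type*} {M : P → Type*} (μ : ∀ x y : P, M y → M x) {x y : ℕ → P} :
    ∀ (k : ℕ), (∀ i ≤ k, x i = y i) → ∀ {m : M (x k)} {m' : M (y k)}, m ≍ m' →
      compAlong μ x k m ≍ compAlong μ y k m'
  | 0, _, _, _, hm => hm
  | k + 1, hxy, _, _, hm =>
      compAlong_heq μ k (fun i hi => hxy i (by omega))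
        (map_heq μ (hxy k (by omega)) (hxy (k + 1) le_rfl) hm)

lemma compAlong_add {P : Type*} {M : P → Type*} (μ : ∀ x y : P, M y → M x) (x : ℕ → P) (p : ℕ) :
    ∀ (q : ℕ) (m : M (x (p + q))),
      compAlong μ x (p + q) m = compAlong μ x p (compAlong μ (fun i => x (p + i)) q m)
  | 0, _ => rfl
  | q + 1, m => compAlong_add μ x p q (μ (x (p + q)) (x (p + q + 1)) m)

lemma compAlong_continuous {P : Type*} {M : P → Type*} [∀ t, TopologicalSpace (M t)]
    (μ : ∀ x y : P, M y → M x) (hμ : ∀ x y, Continuous (μ x y)) (x : ℕ → P) :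
    ∀ k, Continuous (compAlong μ x k)
  | 0 => continuous_id
  | k + 1 => (compAlong_continuous μ hμ x k).comp (hμ _ _)

lemma castM_continuous {P : Type*} (M : P → Type*) [∀ t, TopologicalSpace (M t)] {a b c d : P}
    (h1 : a = c) (h2 : b = d) (f : M a → M b) (hf : Continuous f) :
    Continuous (castM M h1 h2 f) := by
  subst h1 h2
  exact hf

end Chains

namespace Subdivision

variable {s t u : ℝ}

lemma step_le_mesh (I : Subdivision s t) {j : ℕ} (hj : j < I.k) :
    |I.pt (j + 1) - I.pt j| ≤ I.mesh :=
  le_ciSup (f := fun j : Fin I.k => |I.pt (j.1 + 1) - I.pt j.1|)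
    (Set.finite_range _).bddAbove ⟨j, hj⟩

lemma mesh_le (I : Subdivision s t) {d : ℝ} (hd : ∀ j < I.k, |I.pt (j + 1) - I.pt j| ≤ d) :
    I.mesh ≤ d := by
  have : Nonempty (Fin I.k) := ⟨⟨0, I.k_pos⟩⟩
  exact ciSup_le fun j => hd j.1 j.2

lemma exists_mesh_lt (s t : ℝ) {δ : ℝ} (hδ : 0 < δ) : ∃ I : Subdivision s t, I.mesh < δ := by
  obtain ⟨N, hN⟩ := exists_nat_gt (|t - s| / δ)
  have hpos : (0 : ℝ) < (N + 1 : ℕ) := by positivity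
  let I : Subdivision s t :=
    { k := N + 1
      pt := fun i => s + (i : ℝ) / (N + 1 : ℕ) * (t - s)
      k_pos := Nat.succ_pos N
      first := by simp
      last := by rw [div_self hpos.ne']; ring
      mono_of_le := fun hst i j hij _ => by
        have : 0 ≤ t - s := sub_nonneg.2 hst
        gcongr
      anti_of_ge := fun hst i j hij _ => by
        have h1 : t - s ≤ 0 := sub_nonpos.2 hst
        have h2 : (i : ℝ) / (N + 1 : ℕ) ≤ (j : ℝ) / (N + 1 : ℕ) := by gcongr
        exact add_le_add le_rfl (mul_le_mul_of_nonpos_right h2 h1) }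
  refine ⟨I, (I.mesh_le (d := |t - s| / (N + 1 : ℕ)) fun j _ => le_of_eq ?_).trans_lt ?_⟩
  · have : I.pt (j + 1) - I.pt j = (t - s) / (N + 1 : ℕ) := by
      simp only [I]
      push_cast
      ring
    rw [this, abs_div, abs_of_pos hpos]
  · rw [div_lt_iff₀ hδ] at hN
    rw [div_lt_iff₀ hpos]
    push_cast
    nlinarith

/-- The points of the concatenation of a chain with `p` steps and a second chain. -/
def appendPt (p : ℕ) (x y : ℕ → ℝ) (i : ℕ) : ℝ := if i ≤ p then x i else y (i - p)

lemma appendPt_left {p : ℕ} {x y : ℕ → ℝ} {i : ℕ} (hi : i ≤ p) : appendPt p x y i = x i :=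
  if_pos hi

lemma appendPt_right {p : ℕ} {x y : ℕ → ℝ} (hxy : x p = y 0) (i : ℕ) :
    appendPt p x y (p + i) = y i := by
  rcases Nat.eq_zero_or_pos i with rfl | hi
  · simpa [appendPt] using hxy
  · simp [appendPt, hi.ne']

/-- Concatenating two increasing chains for `r` gives an increasing chain. It is applied with `r`
equal to `≤` and to `≥`. -/
lemma appendPt_rel (r : ℝ → ℝ → Prop) [IsTrans ℝ r] {p q : ℕ} {x y : ℕ → ℝ} (hxy : x p = y 0)
    (hx : ∀ i j, i ≤ j → j ≤ p → r (x i) (x j)) (hy : ∀ i j, i ≤ j → j ≤ q → r (y i) (y j))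
    (i j : ℕ) (hij : i ≤ j) (hj : j ≤ p + q) : r (appendPt p x y i) (appendPt p x y j) := by
  rcases le_total j p with hjp | hjp
  · rw [appendPt_left hjp, appendPt_left (hij.trans hjp)]
    exact hx i j hij hjp
  obtain ⟨j, rfl⟩ := Nat.exists_eq_add_of_le hjp
  rw [appendPt_right hxy]
  rcases le_total i p with hip | hip
  · rw [appendPt_left hip]
    exact _root_.trans (hx i p hip le_rfl) (hxy ▸ hy 0 j (Nat.zero_le j) (by omega))
  · obtain ⟨i, rfl⟩ := Nat.exists_eq_add_of_le hip
    rw [appendPt_right hxy]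
    exact hy i j (by omega) (by omega)

/-- Concatenation of subdivisions at a point `u` between `s` and `t`. -/
def append (hu : u ∈ Set.uIcc s t) (I : Subdivision s u) (J : Subdivision u t) :
    Subdivision s t where
  k := I.k + J.k
  pt := appendPt I.k I.pt J.pt
  k_pos := Nat.add_pos_left I.k_pos _
  first := (appendPt_left (Nat.zero_le _)).trans I.first
  last := (appendPt_right (I.last.trans J.first.symm) _).trans J.last
  mono_of_le hst := by
    rw [Set.uIcc_of_le hst] at hu
    exact appendPt_rel (· ≤ ·) (I.last.trans J.first.symm) (I.mono_of_le hu.1) (J.mono_of_le hu.2)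
  anti_of_ge hst := by
    rw [Set.uIcc_of_ge hst] at hu
    exact appendPt_rel (· ≥ ·) (I.last.trans J.first.symm) (I.anti_of_ge hu.2) (J.anti_of_ge hu.1)

lemma append_mesh_le (hu : u ∈ Set.uIcc s t) (I : Subdivision s u) (J : Subdivision u t) :
    (I.append hu J).mesh ≤ max I.mesh J.mesh := by
  refine mesh_le _ fun j hj => ?_
  change j < I.k + J.k at hj
  change |appendPt I.k I.pt J.pt (j + 1) - appendPt I.k I.pt J.pt j| ≤ _
  rcases lt_or_ge j I.k with hjp | hjp
  · rw [appendPt_left hjp, appendPt_left hjp.le]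
    exact (I.step_le_mesh hjp).trans (le_max_left _ _)
  · obtain ⟨j, rfl⟩ := Nat.exists_eq_add_of_le hjp
    rw [add_assoc, appendPt_right (I.last.trans J.first.symm),
      appendPt_right (I.last.trans J.first.symm)]
    exact (J.step_le_mesh (by omega)).trans (le_max_right _ _)

/-- The composition along a concatenation is the composite of the two compositions. -/
lemma append_comp {M : ℝ → Type*} (μ : ∀ s t : ℝ, M t → M s) (hu : u ∈ Set.uIcc s t)
    (I : Subdivision s u) (J : Subdivision u t) (x : M t) :
    (I.append hu J).comp μ x = I.comp μ (J.comp μ x) := by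
  have hIJ : I.pt I.k = J.pt 0 := I.last.trans J.first.symm
  have hx : x ≍ cast (congrArg M (I.append hu J).last.symm) x := (cast_heq _ _).symm
  have hx' : x ≍ cast (congrArg M J.last.symm) x := (cast_heq _ _).symm
  refine eq_of_heq ((castM_heq M _ _ _ hx).trans ?_)
  have hadd := compAlong_add μ (appendPt I.k I.pt J.pt) I.k J.k
    (cast (congrArg M (I.append hu J).last.symm) x)
  refine (heq_of_eq hadd).trans ?_
  -- The composition along the `J`-part, transported to the fibre over `I.pt I.k`.
  have hJ : J.comp μ x ≍ cast (congrArg M I.last.symm) (J.comp μ x) := (cast_heq _ _).symm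
  refine HEq.trans ?_ (castM_heq M I.last I.first _ hJ).symm
  refine compAlong_heq μ I.k (fun i hi => appendPt_left hi) (HEq.trans ?_ hJ)
  refine HEq.trans ?_ (castM_heq M J.last J.first _ hx').symm
  exact compAlong_heq μ J.k (fun i _ => appendPt_right hIJ i) (hx.symm.trans hx')

end Subdivision

lemma limit_continuous {M : ℝ → Type*} [∀ t, MetricSpace (M t)] (μ : ∀ s t : ℝ, M t → M s)
    (hμ : ∀ s t, Continuous (μ s t)) {s t : ℝ} (φ : M t → M s)
    (hφ : ∀ η : ℝ≥0∞, 0 < η → ∃ δ > (0 : ℝ), ∀ I : Subdivision s t,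
      I.mesh < δ → unifDist (I.comp μ) φ < η) : Continuous φ := by
  refine continuous_of_uniform_approx_of_continuous fun V hV => ?_
  obtain ⟨e, he, hV⟩ := mem_uniformity_edist.1 hV
  obtain ⟨δ, hδ, H⟩ := hφ e he
  obtain ⟨I, hI⟩ := Subdivision.exists_mesh_lt s t hδ
  refine ⟨I.comp μ, castM_continuous M _ _ _ (compAlong_continuous μ hμ _ _), fun y => hV ?_⟩
  rw [edist_comm]
  exact (edist_le_unifDist (I.comp μ) φ y).trans_lt (H I hI)

/-- For a local approximate flow `(μ_{st})` with limit maps `φ_{st}` (the uniform limit of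
`μ^I_{st}` as `mesh I → 0`): for all `s, t ∈ ℝ` and all `u` between `s` and `t`,
`φ_{st} = φ_{su} ∘ φ_{ut}`. -/
theorem stmt17 {M : ℝ → Type*} [∀ t, MetricSpace (M t)] [∀ t, CompleteSpace (M t)]
    (μ : ∀ s t : ℝ, M t → M s) (ε : ℝ) (n : ℕ) (a b C : Fin n → ℝ) (f g : ℝ → ℝ)
    (h : IsLocalApproxFlow μ ε n a b C f g)
    (φ : ∀ s t : ℝ, M t → M s)
    (hφ : ∀ s t : ℝ, ∀ η : ℝ≥0∞, 0 < η → ∃ δ > (0 : ℝ), ∀ I : Subdivision s t,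
      I.mesh < δ → unifDist (I.comp μ) (φ s t) < η)
    (s t u : ℝ) (hu : u ∈ Set.uIcc s t) :
    φ s t = fun x => φ s u (φ u t x) := by
  funext x
  refine edist_le_zero.1 (ENNReal.le_of_forall_pos_le_add fun r hr _ => ?_)
  rw [zero_add]
  set η : ℝ≥0∞ := (r : ℝ≥0∞) / 3 with hη
  have hη0 : 0 < η := ENNReal.div_pos (by exact_mod_cast hr.ne') (by simp)
  have hcont := limit_continuous μ h.continuous (φ s u) (hφ s u)
  obtain ⟨κ, hκ, hκφ⟩ := EMetric.continuous_iff.1 hcont (φ u t x) η hη0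
  obtain ⟨δ₁, hδ₁, H₁⟩ := hφ s t η hη0
  obtain ⟨δ₂, hδ₂, H₂⟩ := hφ s u η hη0
  obtain ⟨δ₃, hδ₃, H₃⟩ := hφ u t κ hκ
  obtain ⟨I, hI⟩ := Subdivision.exists_mesh_lt s u (lt_min hδ₁ hδ₂)
  obtain ⟨J, hJ⟩ := Subdivision.exists_mesh_lt u t (lt_min hδ₁ hδ₃)
  have e₁ : edist (φ s t x) (I.comp μ (J.comp μ x)) ≤ η := by
    rw [← Subdivision.append_comp μ hu, edist_comm]
    refine (edist_le_unifDist _ _ x).trans (H₁ _ ?_).le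
    exact (Subdivision.append_mesh_le hu I J).trans_lt
      (max_lt (hI.trans_le (min_le_left _ _)) (hJ.trans_le (min_le_left _ _)))
  have e₂ : edist (I.comp μ (J.comp μ x)) (φ s u (J.comp μ x)) ≤ η :=
    (edist_le_unifDist _ _ _).trans (H₂ I (hI.trans_le (min_le_right _ _))).le
  have e₃ : edist (φ s u (J.comp μ x)) (φ s u (φ u t x)) ≤ η :=
    (hκφ _ ((edist_le_unifDist _ _ x).trans_lt (H₃ J (hJ.trans_le (min_le_right _ _))))).le
  calc edist (φ s t x) (φ s u (φ u t x)) ≤ η + η + η :=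
        (edist_triangle4 _ _ _ _).trans (add_le_add (add_le_add e₁ e₂) e₃)
    _ = r := ENNReal.add_thirds _
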